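/- For every subset S of SU(2), the centralizer Z = {g ∈ SU(2) : g·s = s·g for all s ∈ S} has at most 2 connected components (in the subspace topology of SU(2)). -/

import Mathlib

open Matrix

lemma su2_iff (g : Matrix (Fin 2) (Fin 2) ℂ) : (gᴴ * g = 1 ∧ g.det = 1) ↔
    (g 1 1 = star (g 0 0) ∧ g 1 0 = - star (g 0 1) ∧
      (g 0 0).re ^ 2 + (g 0 0).im ^ 2 + (g 0 1).re ^ 2 + (g 0 1).im ^ 2 = 1) := by
  constructor
  · rintro ⟨h1, h2⟩
    have h3 : gᴴ = g.adjugate := by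
      calc gᴴ = gᴴ * (g * g.adjugate) := by rw [Matrix.mul_adjugate, h2]; simp
        _ = g.adjugate := by rw [← Matrix.mul_assoc, h1, Matrix.one_mul]
    rw [Matrix.adjugate_fin_two] at h3
    have e0 := congrFun (congrFun h3 0) 0
    have e1 := congrFun (congrFun h3 1) 0
    simp [Matrix.conjTranspose_apply] at e0 e1
    have a1 : g 1 1 = star (g 0 0) := by rw [← e0]; rfl
    have a2 : g 1 0 = - star (g 0 1) := by
      have : star (g 0 1) = - g 1 0 := e1
      rw [this, neg_neg]
    refine ⟨a1, a2, ?_⟩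
    rw [Matrix.det_fin_two, a1, a2] at h2
    have := congrArg Complex.re h2
    simp at this
    linarith
  · rintro ⟨a1, a2, a3⟩
    constructor
    · ext i j
      fin_cases i <;> fin_cases j <;>
        simp [Matrix.mul_apply, Fin.sum_univ_two, a1, a2, Complex.ext_iff] <;>
        first
        | done
        | (constructor <;> linarith)
    · rw [Matrix.det_fin_two, a1, a2]
      simp [Complex.ext_iff]
      constructor <;> linarith

lemma su2_half (S : Set (Matrix (Fin 2) (Fin 2) ℂ)) :
    IsPreconnected {g : Matrix (Fin 2) (Fin 2) ℂ |
        ((gᴴ * g = 1 ∧ g.det = 1) ∧ ∀ s ∈ S, g * s = s * g) ∧ 0 ≤ (g 0 0).re} := by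
  apply isPreconnected_of_forall 1
  rintro g ⟨⟨hg, hc⟩, hr⟩
  obtain ⟨a1, a2, a3⟩ := (su2_iff g).1 hg
  set N : ℝ → ℝ := fun t => t ^ 2 + (1 - t) ^ 2 + 2 * t * (1 - t) * (g 0 0).re with hN
  have hpos : ∀ t ∈ Set.Icc (0:ℝ) 1, 0 < N t := by
    rintro t ⟨h0, h1⟩
    have : 0 ≤ 2 * t * (1 - t) * (g 0 0).re :=
      mul_nonneg (mul_nonneg (by linarith) (by linarith)) hr
    simp only [hN]
    nlinarith [sq_nonneg (2 * t - 1)]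
  let f : ℝ → Matrix (Fin 2) (Fin 2) ℂ := fun t =>
    (((√(N t))⁻¹ : ℝ) : ℂ) • ((t : ℂ) • (1 : Matrix (Fin 2) (Fin 2) ℂ) + ((1 - t : ℝ) : ℂ) • g)
  refine ⟨f '' Set.Icc 0 1, ?_, ⟨1, by simp, by simp [f, hN]⟩, ⟨0, by simp, by simp [f, hN]⟩, ?_⟩
  · rintro _ ⟨t, ht, rfl⟩
    have hp := hpos t ht
    obtain ⟨h0, h1⟩ := ht
    have hs : (√(N t))⁻¹ ^ 2 * N t = 1 := by
      rw [inv_pow, Real.sq_sqrt hp.le, inv_mul_cancel₀ hp.ne']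
    have hcn : 0 ≤ (√(N t))⁻¹ := by positivity
    simp only [f]
    generalize (√(N t))⁻¹ = c at hs hcn
    refine ⟨⟨(su2_iff _).2 ⟨?_, ?_, ?_⟩, ?_⟩, ?_⟩
    · simp [a1]
    · simp [a2]
    · simp
      simp only [hN] at hs
      linear_combination hs + c ^ 2 * (1 - t) ^ 2 * a3
    · intro s hs
      simp [Matrix.add_mul, Matrix.mul_add, hc s hs]
    · simp
      exact mul_nonneg hcn (add_nonneg h0 (mul_nonneg (by linarith) hr))
  · apply isPreconnected_Icc.image
    have k1 : ContinuousOn (fun t => (√(N t))⁻¹) (Set.Icc 0 1) := by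
      apply ContinuousOn.inv₀
      · simp only [hN]; fun_prop
      · intro t ht
        exact (Real.sqrt_pos.2 (hpos t ht)).ne'
    have k2 : ContinuousOn (fun t => (((√(N t))⁻¹ : ℝ) : ℂ)) (Set.Icc 0 1) :=
      Complex.continuous_ofReal.comp_continuousOn k1
    have k3 : Continuous (fun t : ℝ =>
        (t : ℂ) • (1 : Matrix (Fin 2) (Fin 2) ℂ) + ((1 - t : ℝ) : ℂ) • g) := by
      fun_prop
    exact k2.smul k3.continuousOn

/-- The centralizer of any subset of `SU(2)` has at most 2 connected
components: it is the union of two preconnected sets. -/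
theorem su2_centralizer_at_most_two_components
    (S : Set (Matrix (Fin 2) (Fin 2) ℂ))
    (hS : ∀ s ∈ S, sᴴ * s = 1 ∧ s.det = 1) :
    ∃ A B : Set (Matrix (Fin 2) (Fin 2) ℂ), IsPreconnected A ∧ IsPreconnected B ∧
      {g : Matrix (Fin 2) (Fin 2) ℂ |
        (gᴴ * g = 1 ∧ g.det = 1) ∧ ∀ s ∈ S, g * s = s * g} = A ∪ B := by
  have key : ∀ g : Matrix (Fin 2) (Fin 2) ℂ,
      ((gᴴ * g = 1 ∧ g.det = 1) ∧ ∀ s ∈ S, g * s = s * g) →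
      (((-g)ᴴ * (-g) = 1 ∧ (-g).det = 1) ∧ ∀ s ∈ S, (-g) * s = s * (-g)) := by
    rintro g ⟨⟨h1, h2⟩, h3⟩
    refine ⟨⟨by simpa using h1, by rw [Matrix.det_neg, h2]; simp⟩, ?_⟩
    intro s hs
    rw [Matrix.neg_mul, Matrix.mul_neg, h3 s hs]
  refine ⟨_, _, su2_half S, (su2_half S).image (fun g => -g) continuous_neg.continuousOn, ?_⟩
  ext g
  constructor
  · intro hg
    rcases le_total 0 (g 0 0).re with h | h
    · exact Or.inl ⟨hg, h⟩
    · exact Or.inr ⟨-g, ⟨key g hg, by simpa using h⟩, neg_neg g⟩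
  · rintro (h | ⟨k, hk, rfl⟩)
    · exact h.1
    · exact key k hk.1
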